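/- The set W of all rational norms p ∈ Z such that there exists a sequence (w_k) in N that is Cauchy with respect to p and satisfies limsup_k p(w_k − 2e₀) ≤ 1, limsup_k p(w_k − 2e₁) ≤ 1 and limsup_k p(w_k − 2e₀ − 2e₁) ≤ 1 (i.e. the three closed unit balls around 2e₀, 2e₁, 2e₀ + 2e₁ meet in the completion of (N, p)) is not a Borel subset of Z. -/

import Mathlib

/-- `ℚ` is regarded as carrying the *discrete* topology, so that `N → ℚ` carries the
product topology with discrete factors. -/
instance (priority := high) discreteRatTopology : TopologicalSpace ℚ := ⊥

/-- A rational-valued norm on the ℚ-vector space `N = ℕ →₀ ℚ` of finitely supported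
functions from `ℕ` to `ℚ`. -/
structure IsRatNorm (p : (ℕ →₀ ℚ) → ℚ) : Prop where
  nonneg : ∀ v, 0 ≤ p v
  eq_zero_iff : ∀ v, p v = 0 ↔ v = 0
  smul_eq : ∀ (q : ℚ) (v), p (q • v) = |q| * p v
  add_le : ∀ v w, p (v + w) ≤ p v + p w

/-- The Polish space `Z` of all rational norms on `N`, topologized as a subspace of
`N → ℚ` (with `ℚ` discrete). -/
def Zspace : Type := {p : (ℕ →₀ ℚ) → ℚ // IsRatNorm p}

instance : TopologicalSpace Zspace := instTopologicalSpaceSubtype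

/-- A sequence in `N` is Cauchy with respect to the rational norm `p`. -/
def IsCauchyWrt (p : (ℕ →₀ ℚ) → ℚ) (v : ℕ → ℕ →₀ ℚ) : Prop :=
  ∀ ε : ℚ, 0 < ε → ∃ K, ∀ m k, K ≤ m → K ≤ k → p (v m - v k) < ε

/-- The set `W ⊆ Z` of rational norms `p` such that the three closed balls of radius `1`
around `2e₀`, `2e₁` and `2e₀ + 2e₁` have a common point in the completion of `(N, p)`:
there is a `p`-Cauchy sequence `(w k)` whose distances to the three centers have
`limsup ≤ 1`. -/
def Wset : Set Zspace :=
  {p | ∃ w : ℕ → ℕ →₀ ℚ, IsCauchyWrt p.val w ∧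
    Filter.limsup (fun k => ((p.val (w k - Finsupp.single 0 2) : ℚ) : ℝ)) Filter.atTop ≤ 1 ∧
    Filter.limsup (fun k => ((p.val (w k - Finsupp.single 1 2) : ℚ) : ℝ)) Filter.atTop ≤ 1 ∧
    Filter.limsup
      (fun k => ((p.val (w k - Finsupp.single 0 2 - Finsupp.single 1 2) : ℚ) : ℝ))
      Filter.atTop ≤ 1}

open Filter MeasureTheory

instance : DiscreteTopology ℚ := ⟨rfl⟩

/-! ### A non-Borel set of subsets of `List ℕ` -/

/-- The initial segment of length `k` of the branch `y`, listed with its last entry first. -/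
def branchNode (y : ℕ → ℕ) : ℕ → List ℕ
  | 0 => []
  | k + 1 => y k :: branchNode y k

@[simp] lemma length_branchNode (y : ℕ → ℕ) (k : ℕ) : (branchNode y k).length = k := by
  induction k with
  | zero => rfl
  | succ k ih => simp [branchNode, ih]

lemma eq_of_branchNode_eq {y z : ℕ → ℕ} {k : ℕ} (h : branchNode y k = branchNode z k) :
    ∀ i < k, y i = z i := by
  induction k with
  | zero => simp
  | succ k ih =>
    simp only [branchNode, List.cons.injEq] at h
    intro i hi
    rcases Nat.lt_succ_iff_lt_or_eq.1 hi with hi | rfl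
    · exact ih h.2 i hi
    · exact h.1

/-- The subsets of `List ℕ` (as characteristic functions) containing all initial segments of
some infinite branch. -/
def HasBranch (T : List ℕ → Bool) : Prop := ∃ y : ℕ → ℕ, ∀ k, T (branchNode y k) = true

/-- Reads `S` as a code for a set of pairs of finite sequences, and takes the section of that
set along `S` itself. -/
def diagonalSection (S : ℕ → Bool) (t : List ℕ) : Bool :=
  S (Encodable.encode (List.ofFn (fun i : Fin t.length => S i), t))

lemma measurable_diagonalSection : Measurable diagonalSection := by
  refine measurable_pi_iff.2 fun t => ?_
  have h1 : Measurable (fun q : ℕ × (ℕ → Bool) => q.2 q.1) :=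
    measurable_from_prod_countable_right fun n => measurable_pi_apply n
  have h2 : Measurable (fun g : Fin t.length → Bool => Encodable.encode (List.ofFn g, t)) :=
    measurable_of_countable _
  have h3 : Measurable (fun (S : ℕ → Bool) (i : Fin t.length) => S i) :=
    measurable_pi_iff.2 fun i => measurable_pi_apply _
  exact h1.comp ((h2.comp h3).prodMk measurable_id)

lemma diagonalSection_eq_true_iff {f : (ℕ → ℕ) → ℕ → Bool} {S : ℕ → Bool}
    (hS : ∀ n, S n = true ↔ ∃ z t, n = Encodable.encode
      (List.ofFn (fun i : Fin t.length => f z i), t) ∧ branchNode z t.length = t) (t : List ℕ) :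
    diagonalSection S t = true ↔ ∃ z, branchNode z t.length = t ∧ ∀ i < t.length, f z i = S i := by
  rw [diagonalSection, hS]
  constructor
  · rintro ⟨z, t', h, hz⟩
    have h' := Encodable.encode_injective h
    obtain ⟨h1, rfl⟩ := Prod.mk.inj h'
    refine ⟨z, hz, fun i hi => ?_⟩
    exact (congrFun (List.ofFn_injective h1) ⟨i, hi⟩).symm
  · rintro ⟨z, hz, h⟩
    refine ⟨z, t, ?_, hz⟩
    congr 3
    funext i
    exact (h i i.2).symm

lemma hasBranch_diagonalSection_iff {f : (ℕ → ℕ) → ℕ → Bool} (hf : Continuous f) {S : ℕ → Bool}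
    (hS : ∀ n, S n = true ↔ ∃ z t, n = Encodable.encode
      (List.ofFn (fun i : Fin t.length => f z i), t) ∧ branchNode z t.length = t) :
    HasBranch (diagonalSection S) ↔ S ∈ Set.range f := by
  simp only [HasBranch, diagonalSection_eq_true_iff hS, length_branchNode]
  constructor
  · rintro ⟨y, hy⟩
    choose z hz hfz using hy
    have hzy : Tendsto z atTop (nhds y) := by
      refine tendsto_pi_nhds.2 fun i => tendsto_nhds_of_eventually_eq ?_
      filter_upwards [eventually_gt_atTop i] with k hk
      exact eq_of_branchNode_eq (hz k) i hk
    have hfS : Tendsto (fun k => f (z k)) atTop (nhds S) := by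
      refine tendsto_pi_nhds.2 fun i => tendsto_nhds_of_eventually_eq ?_
      filter_upwards [eventually_gt_atTop i] with k hk
      exact hfz k i hk
    exact ⟨y, tendsto_nhds_unique ((hf.tendsto y).comp hzy) hfS⟩
  · rintro ⟨y, rfl⟩
    exact ⟨y, fun k => ⟨y, rfl, fun _ _ => rfl⟩⟩

theorem not_measurableSet_hasBranch : ¬ MeasurableSet {T | HasBranch T} := by
  intro h
  have : TopologicalSpace.IsCompletelyMetrizableSpace (ℕ → Bool) := inferInstance
  have hD := (measurable_diagonalSection h).compl.analyticSet
  rw [AnalyticSet] at hD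
  rcases hD with hD | ⟨f, hf, hD⟩
  · have : (fun _ => false) ∈ (diagonalSection ⁻¹' {T | HasBranch T})ᶜ := by
      rintro ⟨y, hy⟩
      simpa [diagonalSection] using hy 0
    rw [hD] at this
    exact this
  · classical
    let S : ℕ → Bool := fun n => decide (∃ z t, n = Encodable.encode
      (List.ofFn (fun i : Fin t.length => f z i), t) ∧ branchNode z t.length = t)
    have hS := hasBranch_diagonalSection_iff hf (S := S) (fun n => decide_eq_true_iff)
    rw [hD] at hS
    exact iff_not_self hS

/-! ### Weighted `ℓ¹` norms -/

/-- The `ℓ¹` norm with weights `c`. -/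
def wsum (c : List ℕ → ℚ) (x : List ℕ →₀ ℚ) : ℚ := x.sum fun s q => c s * |q|

lemma wsum_eq_sum (c : List ℕ → ℚ) {x : List ℕ →₀ ℚ} {S : Finset (List ℕ)}
    (h : x.support ⊆ S) : wsum c x = ∑ s ∈ S, c s * |x s| :=
  Finsupp.sum_of_support_subset _ h _ (by simp)

lemma wsum_nonneg {c : List ℕ → ℚ} (hc : ∀ s, 0 ≤ c s) (x : List ℕ →₀ ℚ) : 0 ≤ wsum c x :=
  Finset.sum_nonneg fun s _ => mul_nonneg (hc s) (abs_nonneg _)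

@[simp] lemma wsum_zero (c : List ℕ → ℚ) : wsum c 0 = 0 := Finsupp.sum_zero_index

@[simp] lemma wsum_single (c : List ℕ → ℚ) (s : List ℕ) (q : ℚ) :
    wsum c (Finsupp.single s q) = c s * |q| := Finsupp.sum_single_index (by simp)

lemma wsum_smul (c : List ℕ → ℚ) (q : ℚ) (x : List ℕ →₀ ℚ) :
    wsum c (q • x) = |q| * wsum c x := by
  rw [wsum_eq_sum c (Finsupp.support_smul (b := q) (g := x)), wsum_eq_sum c subset_rfl,
    Finset.mul_sum]
  refine Finset.sum_congr rfl fun s _ => ?_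
  rw [Finsupp.smul_apply, smul_eq_mul, abs_mul]
  ring

lemma wsum_add_le {c : List ℕ → ℚ} (hc : ∀ s, 0 ≤ c s) (x y : List ℕ →₀ ℚ) :
    wsum c (x + y) ≤ wsum c x + wsum c y := by
  classical
  rw [wsum_eq_sum c Finsupp.support_add, wsum_eq_sum c Finset.subset_union_left,
    wsum_eq_sum c Finset.subset_union_right, ← Finset.sum_add_distrib]
  refine Finset.sum_le_sum fun s _ => ?_
  rw [Finsupp.add_apply, ← mul_add]
  exact mul_le_mul_of_nonneg_left (abs_add_le _ _) (hc s)

lemma mul_abs_le_wsum {c : List ℕ → ℚ} (hc : ∀ s, 0 ≤ c s) (x : List ℕ →₀ ℚ) (s : List ℕ) :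
    c s * |x s| ≤ wsum c x := by
  classical
  rw [wsum_eq_sum c (Finset.subset_insert s x.support)]
  exact Finset.single_le_sum (f := fun s => c s * |x s|)
    (fun t _ => mul_nonneg (hc t) (abs_nonneg _)) (Finset.mem_insert_self _ _)

/-! ### Flows on the tree of finite sequences -/

/-- The divergence of a finitely supported flow: the flow through the edge entering a node minus
the flow through the edges leaving it. -/
noncomputable def divergence : (List ℕ →₀ ℚ) →ₗ[ℚ] (List ℕ →₀ ℚ) :=
  Finsupp.linearCombination ℚ fun s => Finsupp.single s 1 -
    if s = [] then 0 else Finsupp.single s.tail 1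

lemma divergence_single_nil : divergence (Finsupp.single [] 1) = Finsupp.single [] 1 := by
  simp [divergence]

lemma divergence_single_cons (n : ℕ) (s : List ℕ) :
    divergence (Finsupp.single (n :: s) 1) = Finsupp.single (n :: s) 1 - Finsupp.single s 1 := by
  simp [divergence]

/-- The indicator function of the children of `s`. -/
def childIndicator (s t : List ℕ) : ℚ := if t ≠ [] ∧ t.tail = s then 1 else 0

lemma childIndicator_nonneg (s t : List ℕ) : 0 ≤ childIndicator s t := by
  unfold childIndicator; split_ifs <;> norm_num

lemma sub_divergence_apply (x : List ℕ →₀ ℚ) (s : List ℕ) :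
    x s - divergence x s = Finsupp.linearCombination ℚ (childIndicator s) x := by
  classical
  induction x using Finsupp.induction_linear with
  | zero => simp
  | add f g hf hg =>
    rw [map_add, map_add, ← hf, ← hg, Finsupp.add_apply, Finsupp.add_apply]
    ring
  | single t q =>
    cases t with
    | nil => simp [divergence, childIndicator]
    | cons n t =>
      simp only [divergence, Finsupp.linearCombination_single, childIndicator, Finsupp.smul_apply,
        Finsupp.sub_apply, Finsupp.single_apply, smul_eq_mul]
      rcases eq_or_ne t s with h | h
      · simp [h]
      · rcases eq_or_ne (n :: t) s with rfl | h' <;> simp [*]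

lemma abs_sub_divergence_le (x : List ℕ →₀ ℚ) (s : List ℕ) :
    |x s - divergence x s| ≤ wsum (childIndicator s) x := by
  rw [sub_divergence_apply, Finsupp.linearCombination_apply, wsum]
  refine (Finset.abs_sum_le_sum_abs _ _).trans (Finset.sum_le_sum fun t _ => ?_)
  simp only [smul_eq_mul, abs_mul, abs_of_nonneg (childIndicator_nonneg s t), mul_comm, le_refl]

/-- The weight `2⁻ⁿ` on nodes of level `n`. -/
def levelWeight (s : List ℕ) : ℚ := (1 / 2) ^ s.length

lemma levelWeight_pos (s : List ℕ) : 0 < levelWeight s := by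
  unfold levelWeight; positivity

lemma childIndicator_le (s t : List ℕ) :
    childIndicator s t ≤ 2 * (levelWeight s)⁻¹ * levelWeight t := by
  unfold childIndicator
  split_ifs with h
  · obtain ⟨h, rfl⟩ := h
    cases t with
    | nil => exact absurd rfl h
    | cons n t =>
      have := (levelWeight_pos t).ne'
      simp only [levelWeight, List.length_cons, List.tail_cons, pow_succ] at this ⊢
      field_simp
      norm_num
  · have := levelWeight_pos s
    have := levelWeight_pos t
    positivity

lemma abs_apply_le (x y : List ℕ →₀ ℚ) (s : List ℕ) :
    |x s| ≤ |divergence x s| + ∑ t ∈ y.support, childIndicator s t * |x t| +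
      2 * (levelWeight s)⁻¹ * wsum levelWeight (x - y) := by
  classical
  have h1 : wsum (childIndicator s) x ≤ ∑ t ∈ y.support, childIndicator s t * |x t| +
      2 * (levelWeight s)⁻¹ * wsum levelWeight (x - y) := by
    rw [wsum_eq_sum _ (Finset.subset_union_left (s₂ := y.support)),
      wsum_eq_sum levelWeight (Finsupp.support_sub (f := x) (g := y)), Finset.mul_sum,
      ← Finset.inter_eq_right.2 (Finset.subset_union_right (s₁ := x.support) (s₂ := y.support)),
      ← Finset.sum_ite_mem, Finset.inter_eq_right.2 Finset.subset_union_right,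
      ← Finset.sum_add_distrib]
    refine Finset.sum_le_sum fun t _ => ?_
    have h0 := childIndicator_le s t
    have h2 := childIndicator_nonneg s t
    rw [← mul_assoc, Finsupp.sub_apply]
    split_ifs with ht
    · have := mul_nonneg (h2.trans h0) (abs_nonneg (x t - y t))
      linarith
    · rw [Finsupp.notMem_support_iff.1 ht, sub_zero, zero_add]
      exact mul_le_mul_of_nonneg_right h0 (abs_nonneg _)
  have h2 := abs_sub_divergence_le x s
  have h3 := abs_sub_abs_le_abs_sub (x s) (divergence x s)
  linarith

/-- Convergence to zero of a sequence of rationals in the usual (not the discrete) sense. -/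
def Vanishes (u : ℕ → ℚ) : Prop := ∀ ε > 0, ∀ᶠ k in atTop, |u k| < ε

lemma Vanishes.sum {ι : Type*} (S : Finset ι) {c : ι → ℚ} {u : ι → ℕ → ℚ}
    (h : ∀ i ∈ S, c i = 0 ∨ Vanishes (u i)) {ε : ℚ} (hε : 0 < ε) :
    ∀ᶠ k in atTop, ∑ i ∈ S, c i * |u i k| < ε := by
  classical
  induction S using Finset.induction_on generalizing ε with
  | empty => exact .of_forall fun _ => by simpa using hε
  | insert i S hi ih =>
    have hS := ih (fun j hj => h j (Finset.mem_insert_of_mem hj)) (half_pos hε)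
    have hi' : ∀ᶠ k in atTop, c i * |u i k| < ε / 2 := by
      rcases h i (Finset.mem_insert_self _ _) with h0 | h0
      · exact .of_forall fun _ => by simpa [h0] using hε
      · filter_upwards [h0 (ε / 2 / (|c i| + 1)) (by positivity)] with k hk
        rw [lt_div_iff₀ (by positivity)] at hk
        nlinarith [le_abs_self (c i), abs_nonneg (u i k)]
    filter_upwards [hS, hi'] with k h1 h2
    rw [Finset.sum_insert hi]
    linarith

/-- A limit of flows which is conserved at `s` and vanishes at all children of `s` vanishes
at `s`. -/
lemma vanishes_of_children {x : ℕ → List ℕ →₀ ℚ} {s : List ℕ}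
    (hx : ∀ ε > 0, ∃ K, ∀ m ≥ K, wsum levelWeight (x m - x K) < ε)
    (hdiv : Vanishes fun k => divergence (x k) s) (hch : ∀ n, Vanishes fun k => x k (n :: s)) :
    Vanishes fun k => x k s := by
  intro ε hε
  have hs := levelWeight_pos s
  obtain ⟨K, hK⟩ := hx (ε / 3 / (2 * (levelWeight s)⁻¹)) (by positivity)
  have hsum := Vanishes.sum (x K).support (c := childIndicator s) (u := fun t k => x k t)
    (fun t _ => by
      unfold childIndicator
      split_ifs with h
      · obtain ⟨h, rfl⟩ := h
        cases t with
        | nil => exact absurd rfl h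
        | cons n t => exact .inr (hch n)
      · exact .inl rfl) (show 0 < ε / 3 by positivity)
  filter_upwards [hdiv (ε / 3) (by positivity), hsum, eventually_ge_atTop K] with m h1 h2 h3
  have h4 := hK m h3
  rw [lt_div_iff₀ (by positivity)] at h4
  have h5 := abs_apply_le (x m) (x K) s
  linarith

/-! ### The norms -/

/-- The coordinate carrying the flow into the node `s`. -/
def nodeIndex (s : List ℕ) : ℕ := Encodable.encode s + 2

lemma nodeIndex_injective : Function.Injective nodeIndex := fun _ _ h =>
  Encodable.encode_injective (Nat.add_right_cancel h)

/-- The flow encoded by a vector of `N`. -/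
noncomputable def flow : (ℕ →₀ ℚ) →ₗ[ℚ] (List ℕ →₀ ℚ) :=
  Finsupp.lcomapDomain nodeIndex nodeIndex_injective

lemma flow_apply (v : ℕ →₀ ℚ) (s : List ℕ) : flow v s = v (nodeIndex s) := rfl

/-- The weight charging the flow outside of `T`. -/
def offWeight (T : List ℕ → Bool) (s : List ℕ) : ℚ := if T s then 0 else 1

lemma offWeight_nonneg (T : List ℕ → Bool) (s : List ℕ) : 0 ≤ offWeight T s := by
  unfold offWeight; split_ifs <;> norm_num

/-- The planar part of the norm. -/
noncomputable def planeNorm (v : ℕ →₀ ℚ) : ℚ :=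
  max |v 0| (max |v 1| |v 0 + v 1 + flow v []|)

/-- The part of the norm which measures how far the flow is from being conserved and supported
on `T`. -/
noncomputable def penalty (T : List ℕ → Bool) (v : ℕ →₀ ℚ) : ℚ :=
  wsum levelWeight (divergence (flow v)) + wsum (offWeight T) (flow v)

/-- The rational norm attached to `T`. -/
noncomputable def treeNorm (T : List ℕ → Bool) (v : ℕ →₀ ℚ) : ℚ :=
  max (planeNorm v + penalty T v) (1 / 2 * wsum levelWeight (flow v))

lemma planeNorm_nonneg (v : ℕ →₀ ℚ) : 0 ≤ planeNorm v := (abs_nonneg _).trans (le_max_left _ _)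

lemma penalty_nonneg (T : List ℕ → Bool) (v : ℕ →₀ ℚ) : 0 ≤ penalty T v :=
  add_nonneg (wsum_nonneg (fun s => (levelWeight_pos s).le) _)
    (wsum_nonneg (offWeight_nonneg T) _)

lemma planeNorm_smul (q : ℚ) (v : ℕ →₀ ℚ) : planeNorm (q • v) = |q| * planeNorm v := by
  simp only [planeNorm, map_smul, Finsupp.smul_apply, smul_eq_mul, ← mul_add, abs_mul,
    mul_max_of_nonneg _ _ (abs_nonneg q)]

lemma planeNorm_add_le (v w : ℕ →₀ ℚ) : planeNorm (v + w) ≤ planeNorm v + planeNorm w := by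
  simp only [planeNorm, map_add, Finsupp.add_apply]
  refine max_le ?_ (max_le ?_ ?_)
  · exact (abs_add_le _ _).trans (add_le_add (le_max_left _ _) (le_max_left _ _))
  · exact (abs_add_le _ _).trans (add_le_add (le_max_of_le_right (le_max_left _ _))
      (le_max_of_le_right (le_max_left _ _)))
  · rw [show v 0 + w 0 + (v 1 + w 1) + (flow v [] + flow w []) =
      (v 0 + v 1 + flow v []) + (w 0 + w 1 + flow w []) by ring]
    exact (abs_add_le _ _).trans (add_le_add (le_max_of_le_right (le_max_right _ _))
      (le_max_of_le_right (le_max_right _ _)))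

lemma penalty_smul (T : List ℕ → Bool) (q : ℚ) (v : ℕ →₀ ℚ) :
    penalty T (q • v) = |q| * penalty T v := by
  simp only [penalty, map_smul, wsum_smul, mul_add]

lemma penalty_add_le (T : List ℕ → Bool) (v w : ℕ →₀ ℚ) :
    penalty T (v + w) ≤ penalty T v + penalty T w := by
  simp only [penalty, map_add]
  have h1 := wsum_add_le (fun s => (levelWeight_pos s).le) (divergence (flow v))
    (divergence (flow w))
  have h2 := wsum_add_le (offWeight_nonneg T) (flow v) (flow w)
  linarith

lemma eq_zero_of_coordinates {v : ℕ →₀ ℚ} (h0 : v 0 = 0) (h1 : v 1 = 0) (hf : flow v = 0) :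
    v = 0 := by
  ext n
  match n with
  | 0 => exact h0
  | 1 => exact h1
  | n + 2 =>
    have h := flow_apply v (Denumerable.ofNat (List ℕ) n)
    rw [hf, nodeIndex, Denumerable.encode_ofNat] at h
    exact h.symm

lemma isRatNorm_treeNorm (T : List ℕ → Bool) : IsRatNorm (treeNorm T) where
  nonneg v := (add_nonneg (planeNorm_nonneg v) (penalty_nonneg T v)).trans (le_max_left _ _)
  eq_zero_iff v := by
    constructor
    · intro h
      have h1 : planeNorm v + penalty T v ≤ 0 := (le_max_left _ _).trans h.le
      have h2 : 1 / 2 * wsum levelWeight (flow v) ≤ 0 := (le_max_right _ _).trans h.le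
      have h3 : planeNorm v ≤ 0 := by linarith [penalty_nonneg T v]
      refine eq_zero_of_coordinates ?_ ?_ ?_
      · exact abs_nonpos_iff.1 ((le_max_left _ _).trans h3)
      · exact abs_nonpos_iff.1 ((le_max_of_le_right (le_max_left _ _)).trans h3)
      · ext s
        have h4 := mul_abs_le_wsum (fun s => (levelWeight_pos s).le) (flow v) s
        have h5 : levelWeight s * |flow v s| ≤ 0 := by linarith
        exact abs_nonpos_iff.1 (nonpos_of_mul_nonpos_right h5 (levelWeight_pos s))
    · rintro rfl
      simp [treeNorm, planeNorm, penalty]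
  smul_eq q v := by
    simp only [treeNorm, planeNorm_smul, penalty_smul, map_smul, wsum_smul, ← mul_add,
      mul_max_of_nonneg _ _ (abs_nonneg q), mul_left_comm]
  add_le v w := by
    refine max_le ?_ ?_
    · have h1 := planeNorm_add_le v w
      have h2 := penalty_add_le T v w
      have h3 : planeNorm v + penalty T v ≤ treeNorm T v := le_max_left _ _
      have h4 : planeNorm w + penalty T w ≤ treeNorm T w := le_max_left _ _
      linarith
    · have h1 := wsum_add_le (fun s => (levelWeight_pos s).le) (flow v) (flow w)
      have h3 : 1 / 2 * wsum levelWeight (flow v) ≤ treeNorm T v := le_max_right _ _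
      have h4 : 1 / 2 * wsum levelWeight (flow w) ≤ treeNorm T w := le_max_right _ _
      rw [map_add]
      linarith

/-- The norm attached to `T`, as a point of `Zspace`. -/
noncomputable def treePoint (T : List ℕ → Bool) : Zspace := ⟨treeNorm T, isRatNorm_treeNorm T⟩

lemma continuous_treePoint : Continuous treePoint := by
  refine Continuous.subtype_mk (continuous_pi fun v => ?_) _
  have h : Continuous fun T : List ℕ → Bool =>
      fun s : (flow v).support => T s := by fun_prop
  have h' : Continuous fun g : (flow v).support → Bool =>
      max (planeNorm v + (wsum levelWeight (divergence (flow v)) +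
        ∑ s : (flow v).support, (if g s then 0 else 1) * |flow v s|))
        (1 / 2 * wsum levelWeight (flow v)) := continuous_of_discreteTopology
  convert h'.comp h using 2 with T
  simp only [treeNorm, penalty, Function.comp_apply, wsum, Finsupp.sum, offWeight]
  congr 3
  exact (Finset.sum_coe_sort (flow v).support
    (fun s => (if T s then (0 : ℚ) else 1) * |flow v s|)).symm

/-! ### A branch yields a common point of the balls -/

@[simp] lemma flow_single_zero (q : ℚ) : flow (Finsupp.single 0 q) = 0 := by
  ext s; simp [flow_apply, nodeIndex]

@[simp] lemma flow_single_one (q : ℚ) : flow (Finsupp.single 1 q) = 0 := by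
  ext s; simp [flow_apply, nodeIndex]

@[simp] lemma flow_single_nodeIndex (s : List ℕ) (q : ℚ) :
    flow (Finsupp.single (nodeIndex s) q) = Finsupp.single s q := by
  classical
  ext t; simp [flow_apply, Finsupp.single_apply, nodeIndex_injective.eq_iff]

/-- The unit flow along the first edges of the branch `y`. -/
noncomputable def pathVector (y : ℕ → ℕ) : ℕ → ℕ →₀ ℚ
  | 0 => Finsupp.single (nodeIndex []) 1
  | k + 1 => pathVector y k + Finsupp.single (nodeIndex (branchNode y (k + 1))) 1

lemma pathVector_zero_apply (y : ℕ → ℕ) (k : ℕ) : pathVector y k 0 = 0 := by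
  induction k with
  | zero => simp [pathVector, nodeIndex]
  | succ k ih => simp [pathVector, nodeIndex, ih]

lemma pathVector_one_apply (y : ℕ → ℕ) (k : ℕ) : pathVector y k 1 = 0 := by
  induction k with
  | zero => simp [pathVector, nodeIndex]
  | succ k ih => simp [pathVector, nodeIndex, ih]

lemma flow_pathVector_nil (y : ℕ → ℕ) (k : ℕ) : flow (pathVector y k) [] = 1 := by
  induction k with
  | zero => simp [pathVector]
  | succ k ih => simp [pathVector, branchNode, ih]

lemma divergence_flow_pathVector (y : ℕ → ℕ) (k : ℕ) :
    divergence (flow (pathVector y k)) = Finsupp.single (branchNode y k) 1 := by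
  induction k with
  | zero => simp [pathVector, branchNode, divergence_single_nil]
  | succ k ih => simp [pathVector, branchNode, divergence_single_cons, ih]

lemma wsum_levelWeight_pathVector_le (y : ℕ → ℕ) (k : ℕ) :
    wsum levelWeight (flow (pathVector y k)) ≤ 2 - (1 / 2) ^ k := by
  induction k with
  | zero => norm_num [pathVector, levelWeight]
  | succ k ih =>
    rw [pathVector, map_add, flow_single_nodeIndex]
    refine (wsum_add_le (fun s => (levelWeight_pos s).le) _ _).trans ?_
    rw [wsum_single, levelWeight, length_branchNode, pow_succ, abs_one]
    linarith

lemma wsum_offWeight_pathVector {T : List ℕ → Bool} {y : ℕ → ℕ}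
    (hy : ∀ k, T (branchNode y k) = true) (k : ℕ) :
    wsum (offWeight T) (flow (pathVector y k)) = 0 := by
  refine le_antisymm ?_ (wsum_nonneg (offWeight_nonneg T) _)
  induction k with
  | zero =>
    have := hy 0
    simp_all [pathVector, offWeight, branchNode]
  | succ k ih =>
    rw [pathVector, map_add, flow_single_nodeIndex]
    refine (wsum_add_le (offWeight_nonneg T) _ _).trans ?_
    rw [wsum_single, offWeight, if_pos (hy _)]
    linarith

lemma treeNorm_add_pathVector_le {T : List ℕ → Bool} {y : ℕ → ℕ}
    (hy : ∀ k, T (branchNode y k) = true) {a b : ℚ} (ha : |a| ≤ 1) (hb : |b| ≤ 1)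
    (hab : |a + b + 1| ≤ 1) (k : ℕ) :
    treeNorm T (Finsupp.single 0 a + Finsupp.single 1 b + pathVector y k) ≤ 1 + (1 / 2) ^ k := by
  have h1 := wsum_levelWeight_pathVector_le y k
  have h2 : (0 : ℚ) < (1 / 2) ^ k := by positivity
  refine max_le (add_le_add (max_le ?_ (max_le ?_ ?_)) ?_) ?_
  · simpa [pathVector_zero_apply] using ha
  · simpa [pathVector_one_apply] using hb
  · simpa [pathVector_zero_apply, pathVector_one_apply, flow_pathVector_nil] using hab
  · simp [penalty, divergence_flow_pathVector, wsum_offWeight_pathVector hy, levelWeight]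
  · simp only [map_add, flow_single_zero, flow_single_one, zero_add]
    linarith

lemma treeNorm_pathVector_succ_sub_le {T : List ℕ → Bool} {y : ℕ → ℕ}
    (hy : ∀ k, T (branchNode y k) = true) (k : ℕ) :
    treeNorm T (pathVector y (k + 1) - pathVector y k) ≤ 2 * (1 / 2) ^ k := by
  have h2 : (0 : ℚ) < (1 / 2) ^ k := by positivity
  rw [pathVector, add_sub_cancel_left]
  refine max_le ?_ ?_
  · have h3 : planeNorm (Finsupp.single (nodeIndex (branchNode y (k + 1))) 1) = 0 := by
      simp [planeNorm, nodeIndex, branchNode, flow_apply]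
    have h4 := hy (k + 1)
    have h5 := wsum_add_le (fun s => (levelWeight_pos s).le)
      (Finsupp.single (branchNode y (k + 1)) 1) (-Finsupp.single (branchNode y k) 1)
    have h6 := wsum_smul levelWeight (-1) (Finsupp.single (branchNode y k) 1)
    rw [neg_one_smul] at h6
    rw [h6, wsum_single, wsum_single, levelWeight, levelWeight, length_branchNode,
      length_branchNode, pow_succ, ← sub_eq_add_neg] at h5
    rw [h3, penalty, flow_single_nodeIndex, wsum_single, offWeight, if_pos h4, branchNode,
      divergence_single_cons]
    rw [branchNode] at h5
    simp only [abs_neg, abs_one, mul_one, one_mul, zero_add, add_zero] at h5 ⊢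
    linarith
  · rw [flow_single_nodeIndex, wsum_single, levelWeight, length_branchNode, pow_succ, abs_one]
    linarith

lemma IsRatNorm.neg {p : (ℕ →₀ ℚ) → ℚ} (hp : IsRatNorm p) (v : ℕ →₀ ℚ) : p (-v) = p v := by
  simpa using hp.smul_eq (-1) v

lemma IsRatNorm.sub_rev {p : (ℕ →₀ ℚ) → ℚ} (hp : IsRatNorm p) (v w : ℕ →₀ ℚ) :
    p (v - w) = p (w - v) := by
  rw [← hp.neg, neg_sub]

lemma IsRatNorm.sub_le {p : (ℕ →₀ ℚ) → ℚ} (hp : IsRatNorm p) (u v w : ℕ →₀ ℚ) :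
    p (u - w) ≤ p (u - v) + p (v - w) := by
  simpa using hp.add_le (u - v) (v - w)

lemma IsRatNorm.isCauchyWrt_of_geometric {p : (ℕ →₀ ℚ) → ℚ} (hp : IsRatNorm p)
    {w : ℕ → ℕ →₀ ℚ} (C : ℚ) (hw : ∀ k, p (w (k + 1) - w k) ≤ C * (1 / 2) ^ k) :
    IsCauchyWrt p w := by
  have hC : 0 ≤ C := by simpa using (hp.nonneg _).trans (hw 0)
  have h1 : ∀ K j, p (w (K + j) - w K) ≤ 2 * C * (1 / 2) ^ K - 2 * C * (1 / 2) ^ (K + j) := by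
    intro K j
    induction j with
    | zero => simp [(hp.eq_zero_iff 0).2 rfl]
    | succ j ih =>
      have h2 := hp.sub_le (w (K + (j + 1))) (w (K + j)) (w K)
      have h3 := hw (K + j)
      rw [← add_assoc] at h2 ⊢
      rw [pow_succ _ (K + j)]
      linarith
  have h2 : ∀ K m, K ≤ m → p (w m - w K) ≤ 2 * C * (1 / 2) ^ K := by
    intro K m hm
    obtain ⟨j, rfl⟩ := Nat.exists_eq_add_of_le hm
    have : 0 ≤ 2 * C * (1 / 2) ^ (K + j) := by positivity
    linarith [h1 K j]
  intro ε hε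
  obtain ⟨K, hK⟩ := exists_pow_lt_of_lt_one (show 0 < ε / (4 * C + 1) by positivity)
    (show (1 / 2 : ℚ) < 1 by norm_num)
  rw [lt_div_iff₀ (by positivity)] at hK
  refine ⟨K, fun m k hm hk => ?_⟩
  have h3 := hp.sub_le (w m) (w K) (w k)
  rw [hp.sub_rev (w K)] at h3
  have : (0 : ℚ) < (1 / 2) ^ K := by positivity
  linarith [h2 K m hm, h2 K k hk]

lemma limsup_le_one_of_le {u : ℕ → ℚ} (h0 : ∀ k, 0 ≤ u k) (h : ∀ k, u k ≤ 1 + (1 / 2) ^ k) :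
    limsup (fun k => (u k : ℝ)) atTop ≤ 1 := by
  have h1 : Tendsto (fun k : ℕ => 1 + (1 / 2 : ℝ) ^ k) atTop (nhds 1) := by
    simpa using (tendsto_pow_atTop_nhds_zero_of_lt_one (by norm_num : (0 : ℝ) ≤ 1 / 2)
      (by norm_num)).const_add 1
  rw [← h1.limsup_eq]
  refine limsup_le_limsup (.of_forall fun k => ?_) ?_ h1.isBoundedUnder_le
  · simpa using (Rat.cast_le (K := ℝ)).2 (h k)
  · refine IsBoundedUnder.isCoboundedUnder_le ⟨0, ?_⟩
    exact eventually_map.2 (.of_forall fun k => by simpa using h0 k)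

lemma treePoint_mem_of_hasBranch {T : List ℕ → Bool} (hT : HasBranch T) :
    treePoint T ∈ Wset := by
  obtain ⟨y, hy⟩ := hT
  have hp := isRatNorm_treeNorm T
  refine ⟨fun k => Finsupp.single 0 1 + Finsupp.single 1 1 + pathVector y k, ?_, ?_, ?_, ?_⟩
  · refine hp.isCauchyWrt_of_geometric 2 fun k => ?_
    rw [add_sub_add_left_eq_sub]
    exact treeNorm_pathVector_succ_sub_le hy k
  all_goals
    refine limsup_le_one_of_le (fun k => hp.nonneg _) fun k => ?_
    change treeNorm T _ ≤ _
  · convert treeNorm_add_pathVector_le hy (a := -1) (b := 1) (by norm_num) (by norm_num)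
      (by norm_num) k using 2
    rw [show (-1 : ℚ) = 1 - 2 by norm_num, Finsupp.single_sub]
    ext n
    simp only [Finsupp.add_apply, Finsupp.sub_apply]
    ring
  · convert treeNorm_add_pathVector_le hy (a := 1) (b := -1) (by norm_num) (by norm_num)
      (by norm_num) k using 2
    rw [show (-1 : ℚ) = 1 - 2 by norm_num, Finsupp.single_sub]
    ext n
    simp only [Finsupp.add_apply, Finsupp.sub_apply]
    ring
  · convert treeNorm_add_pathVector_le hy (a := -1) (b := -1) (by norm_num) (by norm_num)
      (by norm_num) k using 2
    rw [show (-1 : ℚ) = 1 - 2 by norm_num, Finsupp.single_sub, Finsupp.single_sub]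
    ext n
    simp only [Finsupp.add_apply, Finsupp.sub_apply]
    ring

/-! ### A common point of the balls yields a branch -/

lemma IsRatNorm.eventually_lt {p : (ℕ →₀ ℚ) → ℚ} (hp : IsRatNorm p) {w : ℕ → ℕ →₀ ℚ}
    (hw : IsCauchyWrt p w) {c : ℕ →₀ ℚ}
    (hc : limsup (fun k => ((p (w k - c) : ℚ) : ℝ)) atTop ≤ 1) {ε : ℚ} (hε : 0 < ε) :
    ∀ᶠ k in atTop, p (w k - c) < 1 + ε := by
  obtain ⟨K, hK⟩ := hw 1 one_pos
  have hb : IsBoundedUnder (· ≤ ·) atTop (fun k => ((p (w k - c) : ℚ) : ℝ)) := by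
    refine ⟨((1 + p (w K - c) : ℚ) : ℝ), eventually_map.2 ?_⟩
    filter_upwards [eventually_ge_atTop K] with k hk
    have h1 := hp.sub_le (w k) (w K) c
    have h2 := hK k K hk le_rfl
    exact Rat.cast_le.2 (by linarith)
  have hlt : limsup (fun k => ((p (w k - c) : ℚ) : ℝ)) atTop < ((1 + ε : ℚ) : ℝ) := by
    refine hc.trans_lt ?_
    exact_mod_cast (show (1 : ℚ) < 1 + ε by linarith)
  filter_upwards [eventually_lt_of_limsup_lt hlt hb] with k hk
  exact Rat.cast_lt.1 hk

lemma planeNorm_add_penalty_le (T : List ℕ → Bool) (v : ℕ →₀ ℚ) :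
    planeNorm v + penalty T v ≤ treeNorm T v := le_max_left _ _

lemma penalty_lt_and_root_lt {T : List ℕ → Bool} {v : ℕ →₀ ℚ} {ε : ℚ}
    (h0 : treeNorm T (v - Finsupp.single 0 2) < 1 + ε)
    (h1 : treeNorm T (v - Finsupp.single 1 2) < 1 + ε)
    (h2 : treeNorm T (v - Finsupp.single 0 2 - Finsupp.single 1 2) < 1 + ε) :
    penalty T v < ε ∧ 1 - 3 * ε < flow v [] := by
  have h0 := (planeNorm_add_penalty_le T _).trans_lt h0
  have h1 := (planeNorm_add_penalty_le T _).trans_lt h1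
  have h2 := (planeNorm_add_penalty_le T _).trans_lt h2
  have hv := penalty_nonneg T v
  simp only [penalty, planeNorm, map_sub, flow_single_zero, flow_single_one, sub_zero,
    Finsupp.sub_apply, Finsupp.single_eq_same, ← lt_sub_iff_add_lt, max_lt_iff, abs_lt,
    Finsupp.single_eq_of_ne (zero_ne_one' ℕ), Finsupp.single_eq_of_ne (one_ne_zero' ℕ)] at *
  constructor <;> linarith

lemma Vanishes.of_mul_abs_le {u v : ℕ → ℚ} (hv : Vanishes v) {c : ℚ} (hc : 0 < c)
    (h : ∀ k, c * |u k| ≤ v k) : Vanishes u := by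
  intro ε hε
  filter_upwards [hv (c * ε) (by positivity)] with k hk
  exact lt_of_mul_lt_mul_left ((h k).trans_lt ((le_abs_self _).trans_lt hk)) hc.le

lemma hasBranch_of_treePoint_mem {T : List ℕ → Bool} (hT : treePoint T ∈ Wset) :
    HasBranch T := by
  obtain ⟨w, hw, h0, h1, h2⟩ := hT
  have hp := isRatNorm_treeNorm T
  have hlim : ∀ ε > 0, ∀ᶠ k in atTop, penalty T (w k) < ε ∧ 1 - 3 * ε < flow (w k) [] := by
    intro ε hε
    simp only [sub_sub] at h2
    filter_upwards [hp.eventually_lt hw h0 hε, hp.eventually_lt hw h1 hε,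
      hp.eventually_lt hw h2 hε] with k hk0 hk1 hk2
    rw [← sub_sub] at hk2
    exact penalty_lt_and_root_lt hk0 hk1 hk2
  have hpen : Vanishes fun k => penalty T (w k) := fun ε hε => by
    filter_upwards [hlim ε hε] with k hk
    rw [abs_of_nonneg (penalty_nonneg _ _)]
    exact hk.1
  have hlevel : ∀ s, 0 ≤ levelWeight s := fun s => (levelWeight_pos s).le
  have hdiv : ∀ s, Vanishes fun k => divergence (flow (w k)) s := fun s =>
    hpen.of_mul_abs_le (levelWeight_pos s) fun k => (mul_abs_le_wsum hlevel _ s).trans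
      (le_add_of_nonneg_right (wsum_nonneg (offWeight_nonneg T) _))
  have hoff : ∀ s, T s = false → Vanishes fun k => flow (w k) s := fun s hs =>
    hpen.of_mul_abs_le one_pos fun k => by
      have h := mul_abs_le_wsum (offWeight_nonneg T) (flow (w k)) s
      rw [offWeight, if_neg (by simp [hs])] at h
      exact h.trans (le_add_of_nonneg_left (wsum_nonneg hlevel _))
  have hroot : ¬ Vanishes fun k => flow (w k) [] := by
    intro h
    obtain ⟨k, hk, hk'⟩ := ((h (1 / 2) (by norm_num)).and (hlim (1 / 6) (by norm_num))).exists
    have := le_abs_self (flow (w k) [])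
    linarith [hk'.2]
  have hcauchy : ∀ ε > 0, ∃ K, ∀ m ≥ K, wsum levelWeight (flow (w m) - flow (w K)) < ε := by
    intro ε hε
    obtain ⟨K, hK⟩ := hw (ε / 2) (by positivity)
    refine ⟨K, fun m hm => ?_⟩
    have h3 : 1 / 2 * wsum levelWeight (flow (w m - w K)) ≤ treeNorm T (w m - w K) :=
      le_max_right _ _
    have h4 : treeNorm T (w m - w K) < ε / 2 := hK m K hm le_rfl
    rw [map_sub] at h3
    linarith
  have hchild : ∀ s : {s // ¬ Vanishes fun k => flow (w k) s},
      ∃ n, ¬ Vanishes fun k => flow (w k) (n :: s.1) := by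
    rintro ⟨s, hs⟩
    by_contra! h
    exact hs (vanishes_of_children hcauchy (hdiv s) h)
  choose child hchild using hchild
  let node : ℕ → {s // ¬ Vanishes fun k => flow (w k) s} := fun k =>
    Nat.rec ⟨[], hroot⟩ (fun _ s => ⟨child s :: s.1, hchild s⟩) k
  refine ⟨fun k => child (node k), fun k => ?_⟩
  have hnode : branchNode (fun k => child (node k)) k = (node k).1 := by
    induction k with
    | zero => rfl
    | succ k ih => rw [branchNode, ih]
  rw [hnode]
  by_contra h
  exact (node k).2 (hoff _ (by simpa using h))

/-- The set `W` of norms for which the three closed unit balls around `2e₀`, `2e₁`,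
`2e₀ + 2e₁` meet in the completion is not a Borel subset of `Z`. -/
theorem stmt13 : ¬ @MeasurableSet Zspace (borel Zspace) Wset := by
  intro h
  let _ : MeasurableSpace Zspace := borel Zspace
  have : BorelSpace Zspace := ⟨rfl⟩
  refine not_measurableSet_hasBranch ?_
  have hpre : {T | HasBranch T} = treePoint ⁻¹' Wset :=
    Set.ext fun T => ⟨treePoint_mem_of_hasBranch, hasBranch_of_treePoint_mem⟩
  rw [hpre]
  exact continuous_treePoint.measurable h
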